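/- arXiv:1907.00186 — 4 statements merged into one kernel-verified Lean document; each statement's English description precedes it below -/
import Mathlib

section
/- There exists a constant C ≥ 1 such that for all x, y ∈ ℝ^N \ {0} with x ≠ y, the integral ∫₀^∞ (1 + t^{γ/(2s)}|x|^{−γ})(1 + t^{γ/(2s)}|y|^{−γ}) · min( t^{−N/(2s)} , t·|x−y|^{−(N+2s)} ) dt is finite and satisfies C^{−1} H(x,y) ≤ ∫₀^∞ (1 + t^{γ/(2s)}|x|^{−γ})(1 + t^{γ/(2s)}|y|^{−γ}) · min( t^{−N/(2s)} , t·|x−y|^{−(N+2s)} ) dt ≤ C H(x,y). -/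
/-!
With `p = N / (2s)` and `T = |x - y| ^ (2s)`, the free kernel `min (t ^ (-p)) (t * T ^ (-(p + 1)))`
switches branch at `t = T`. Splitting at `T` computes its moments exactly: for `-2 < a < p - 1`,
the integral of `t ^ a` against it is a positive constant times `T ^ a * T ^ (1 - p)`. Hence
integrating any positive combination `f` of such powers gives `f T * T ^ (1 - p)` up to constants.
For `f t = (1 + t ^ (γ / (2s)) * |x| ^ (-γ)) * (1 + t ^ (γ / (2s)) * |y| ^ (-γ))` the exponents are
`0`, `γ / (2s)` and `γ / s`, admissible because `2γ < N - 2s`, and `f T * T ^ (1 - p)` is exactly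
`H(x, y)`.
-/

open MeasureTheory Real Set

noncomputable def Hker (N : ℕ) (s γ : ℝ) (x y : EuclideanSpace ℝ (Fin N)) : ℝ :=
  ‖x - y‖ ^ (-((N : ℝ) - 2*s)) +
    (‖x‖ ^ (-γ) + ‖y‖ ^ (-γ)) * ‖x - y‖ ^ (-((N : ℝ) - 2*s - γ)) +
    ‖x‖ ^ (-γ) * ‖y‖ ^ (-γ) * ‖x - y‖ ^ (-((N : ℝ) - 2*s - 2*γ))

/-- The two-sided bound at time `t` for the heat kernel of the fractional Laplacian, with
`p = N / (2s)` and the spatial distance encoded by its diffusive time `T = |x - y| ^ (2s)`. -/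
noncomputable def stableProfile (p T t : ℝ) : ℝ :=
  min (t ^ (-p)) (t * T ^ (-(p + 1)))

/-- The moment `∫₀^∞ t ^ a * stableProfile p 1 t dt`, in closed form for `-2 < a < p - 1`. -/
noncomputable def stableMoment (p a : ℝ) : ℝ :=
  1 / (a + 2) + 1 / (p - 1 - a)

/-- The two-sided bound at time `t` for the heat kernel of the fractional Hardy operator, in real
dimension `d`, with the weights `|x| ^ (-γ)`, `|y| ^ (-γ)` replaced by arbitrary `A`, `B` and
`|x - y|` by `r`. -/
noncomputable def hardyHeatProfile (d s γ A B r t : ℝ) : ℝ :=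
  (1 + t ^ (γ / (2 * s)) * A) * (1 + t ^ (γ / (2 * s)) * B) *
    min (t ^ (-(d / (2 * s)))) (t * r ^ (-(d + 2 * s)))

/-- The comparison kernel for the time integral of `hardyHeatProfile`; `Hker` is its value at
`A = |x| ^ (-γ)`, `B = |y| ^ (-γ)`, `r = |x - y|`. -/
noncomputable def hardyGreenProfile (d s γ A B r : ℝ) : ℝ :=
  r ^ (-(d - 2 * s)) + (A + B) * r ^ (-(d - 2 * s - γ)) + A * B * r ^ (-(d - 2 * s - 2 * γ))

section StableProfile

variable {a p T t : ℝ}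

lemma mul_rpow_neg_add_one (ht : 0 < t) : t * t ^ (-(p + 1)) = t ^ (-p) := by
  rw [neg_add', rpow_sub_one ht.ne', mul_div_cancel₀ _ ht.ne']

lemma stableProfile_of_le (hp : -1 ≤ p) (ht : 0 < t) (htT : t ≤ T) :
    stableProfile p T t = t * T ^ (-(p + 1)) := by
  refine min_eq_right ?_
  rw [← mul_rpow_neg_add_one ht]
  exact mul_le_mul_of_nonneg_left (rpow_le_rpow_of_nonpos ht htT (by linarith)) ht.le

lemma stableProfile_of_ge (hp : -1 ≤ p) (hT : 0 < T) (hTt : T ≤ t) :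
    stableProfile p T t = t ^ (-p) := by
  have ht : 0 < t := hT.trans_le hTt
  refine min_eq_left ?_
  rw [← mul_rpow_neg_add_one ht]
  exact mul_le_mul_of_nonneg_left (rpow_le_rpow_of_nonpos hT hTt (by linarith)) ht.le

lemma eqOn_rpow_mul_stableProfile_Ioc (hp : -1 ≤ p) :
    EqOn (fun t => t ^ a * stableProfile p T t) (fun t => T ^ (-(p + 1)) * t ^ (a + 1))
      (Ioc 0 T) := by
  intro t ⟨ht, htT⟩
  simp only [stableProfile_of_le hp ht htT, rpow_add_one ht.ne']
  ring

lemma eqOn_rpow_mul_stableProfile_Ioi (hp : -1 ≤ p) (hT : 0 < T) :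
    EqOn (fun t => t ^ a * stableProfile p T t) (fun t => t ^ (a - p)) (Ioi T) := by
  intro t hTt
  simp only [stableProfile_of_ge hp hT (le_of_lt hTt), ← rpow_add (hT.trans hTt), sub_eq_add_neg]

lemma integrableOn_Ioc_rpow_mul_stableProfile (hp : -1 ≤ p) (ha : -2 < a) (hT : 0 < T) :
    IntegrableOn (fun t => t ^ a * stableProfile p T t) (Ioc 0 T) := by
  rw [integrableOn_congr_fun (eqOn_rpow_mul_stableProfile_Ioc hp) measurableSet_Ioc,
    ← intervalIntegrable_iff_integrableOn_Ioc_of_le hT.le]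
  exact (intervalIntegral.intervalIntegrable_rpow' (by linarith)).const_mul _

lemma integrableOn_Ioi_rpow_mul_stableProfile (hp : -1 ≤ p) (hap : a < p - 1) (hT : 0 < T) :
    IntegrableOn (fun t => t ^ a * stableProfile p T t) (Ioi T) := by
  rw [integrableOn_congr_fun (eqOn_rpow_mul_stableProfile_Ioi hp hT) measurableSet_Ioi]
  exact integrableOn_Ioi_rpow_of_lt (by linarith) hT

lemma integral_Ioc_rpow_mul_stableProfile (hp : -1 ≤ p) (ha : -2 < a) (hT : 0 < T) :
    ∫ t in Ioc 0 T, t ^ a * stableProfile p T t = 1 / (a + 2) * (T ^ a * T ^ (1 - p)) := by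
  have hpow : T ^ (-(p + 1)) * T ^ (a + 1 + 1) = T ^ a * T ^ (1 - p) := by
    rw [← rpow_add hT, ← rpow_add hT]
    ring_nf
  rw [setIntegral_congr_fun measurableSet_Ioc (eqOn_rpow_mul_stableProfile_Ioc hp),
    integral_const_mul, ← intervalIntegral.integral_of_le hT.le,
    integral_rpow (Or.inl (by linarith)), zero_rpow (by linarith), sub_zero, ← mul_div_assoc, hpow]
  ring

lemma integral_Ioi_rpow_mul_stableProfile (hp : -1 ≤ p) (hap : a < p - 1) (hT : 0 < T) :
    ∫ t in Ioi T, t ^ a * stableProfile p T t = 1 / (p - 1 - a) * (T ^ a * T ^ (1 - p)) := by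
  have hpow : T ^ (a - p + 1) = T ^ a * T ^ (1 - p) := by
    rw [← rpow_add hT]
    ring_nf
  have hden : a - p + 1 = -(p - 1 - a) := by ring
  rw [setIntegral_congr_fun measurableSet_Ioi (eqOn_rpow_mul_stableProfile_Ioi hp hT),
    integral_Ioi_rpow_of_lt (by linarith) hT, hpow, hden, neg_div_neg_eq, div_eq_inv_mul, one_div]

lemma integrableOn_rpow_mul_stableProfile (ha : a ∈ Ioo (-2) (p - 1)) (hT : 0 < T) :
    IntegrableOn (fun t => t ^ a * stableProfile p T t) (Ioi 0) := by
  have hp : -1 ≤ p := by linarith [ha.1, ha.2]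
  rw [← Ioc_union_Ioi_eq_Ioi hT.le]
  exact (integrableOn_Ioc_rpow_mul_stableProfile hp ha.1 hT).union
    (integrableOn_Ioi_rpow_mul_stableProfile hp ha.2 hT)

lemma integral_rpow_mul_stableProfile (ha : a ∈ Ioo (-2) (p - 1)) (hT : 0 < T) :
    ∫ t in Ioi 0, t ^ a * stableProfile p T t = stableMoment p a * (T ^ a * T ^ (1 - p)) := by
  have hp : -1 ≤ p := by linarith [ha.1, ha.2]
  rw [← Ioc_union_Ioi_eq_Ioi hT.le, setIntegral_union (Ioc_disjoint_Ioi le_rfl) measurableSet_Ioi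
      (integrableOn_Ioc_rpow_mul_stableProfile hp ha.1 hT)
      (integrableOn_Ioi_rpow_mul_stableProfile hp ha.2 hT),
    integral_Ioc_rpow_mul_stableProfile hp ha.1 hT, integral_Ioi_rpow_mul_stableProfile hp ha.2 hT,
    stableMoment, add_mul]

lemma stableMoment_pos (ha : a ∈ Ioo (-2) (p - 1)) : 0 < stableMoment p a :=
  add_pos (one_div_pos.2 (by linarith [ha.1])) (one_div_pos.2 (by linarith [ha.2]))

end StableProfile

section FiniteSums

variable {ι : Type*} [Fintype ι]

lemma exists_one_le_forall_sum_mul_mem_Icc {c : ι → ℝ} (hc : ∀ i, 0 < c i) :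
    ∃ C, 1 ≤ C ∧ ∀ u : ι → ℝ, (∀ i, 0 ≤ u i) →
      ∑ i, c i * u i ∈ Icc (C⁻¹ * ∑ i, u i) (C * ∑ i, u i) := by
  obtain ⟨M, hM⟩ := Finite.exists_le fun i => max (c i) (c i)⁻¹
  have hle (i : ι) : c i ≤ max 1 M := (le_max_left _ _).trans ((hM i).trans (le_max_right _ _))
  have hge (i : ι) : (max 1 M)⁻¹ ≤ c i :=
    inv_le_of_inv_le₀ (hc i) ((le_max_right _ _).trans ((hM i).trans (le_max_right _ _)))
  refine ⟨max 1 M, le_max_left _ _, fun u hu => ?_⟩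
  rw [Finset.mul_sum, Finset.mul_sum]
  exact ⟨Finset.sum_le_sum fun i _ => mul_le_mul_of_nonneg_right (hge i) (hu i),
    Finset.sum_le_sum fun i _ => mul_le_mul_of_nonneg_right (hle i) (hu i)⟩

variable {p T : ℝ} {a : ι → ℝ}

lemma integrableOn_sum_rpow_mul_stableProfile (ha : ∀ i, a i ∈ Ioo (-2) (p - 1)) (w : ι → ℝ)
    (hT : 0 < T) :
    IntegrableOn (fun t => (∑ i, w i * t ^ a i) * stableProfile p T t) (Ioi 0) := by
  simp only [Finset.sum_mul, mul_assoc]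
  exact integrable_finsetSum _ fun i _ =>
    (integrableOn_rpow_mul_stableProfile (ha i) hT).const_mul (w i)

lemma integral_sum_rpow_mul_stableProfile (ha : ∀ i, a i ∈ Ioo (-2) (p - 1)) (w : ι → ℝ)
    (hT : 0 < T) :
    ∫ t in Ioi 0, (∑ i, w i * t ^ a i) * stableProfile p T t =
      ∑ i, stableMoment p (a i) * (w i * T ^ a i * T ^ (1 - p)) := by
  simp only [Finset.sum_mul, mul_assoc]
  rw [integral_finsetSum _ fun i _ =>
    (integrableOn_rpow_mul_stableProfile (ha i) hT).const_mul (w i)]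
  refine Finset.sum_congr rfl fun i _ => ?_
  rw [integral_const_mul, integral_rpow_mul_stableProfile (ha i) hT]
  ring

lemma exists_one_le_forall_integral_sum_rpow_mul_stableProfile_mem_Icc
    (ha : ∀ i, a i ∈ Ioo (-2) (p - 1)) :
    ∃ C, 1 ≤ C ∧ ∀ (w : ι → ℝ) (T : ℝ), (∀ i, 0 ≤ w i) → 0 < T →
      ∫ t in Ioi 0, (∑ i, w i * t ^ a i) * stableProfile p T t ∈
        Icc (C⁻¹ * ((∑ i, w i * T ^ a i) * T ^ (1 - p)))
          (C * ((∑ i, w i * T ^ a i) * T ^ (1 - p))) := by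
  obtain ⟨C, hC, hsum⟩ := exists_one_le_forall_sum_mul_mem_Icc fun i => stableMoment_pos (ha i)
  refine ⟨C, hC, fun w T hw hT => ?_⟩
  rw [integral_sum_rpow_mul_stableProfile ha w hT, Finset.sum_mul]
  exact hsum _ fun i => mul_nonneg (mul_nonneg (hw i) (by positivity)) (by positivity)

end FiniteSums

section HardyProfile

variable {d s γ A B r t : ℝ}

lemma one_add_rpow_mul_mul_one_add_rpow_mul (b A B : ℝ) (ht : 0 < t) :
    (1 + t ^ b * A) * (1 + t ^ b * B) =
      ∑ i, ![1, A + B, A * B] i * t ^ ![0, b, 2 * b] i := by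
  have hsq : t ^ (2 * b) = t ^ b * t ^ b := by rw [two_mul, rpow_add ht]
  simp only [Fin.sum_univ_three, Matrix.cons_val, rpow_zero, hsq]
  ring

lemma hardyHeatProfile_eq_sum_mul_stableProfile (hs : s ≠ 0) (hr : 0 < r) (ht : 0 < t) :
    hardyHeatProfile d s γ A B r t =
      (∑ i, ![1, A + B, A * B] i * t ^ ![0, γ / (2 * s), 2 * (γ / (2 * s))] i) *
        stableProfile (d / (2 * s)) (r ^ (2 * s)) t := by
  have hexp : 2 * s * -(d / (2 * s) + 1) = -(d + 2 * s) := by field_simp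
  rw [← one_add_rpow_mul_mul_one_add_rpow_mul _ _ _ ht, stableProfile, ← rpow_mul hr.le, hexp,
    hardyHeatProfile]

lemma hardyGreenProfile_eq_sum_mul_rpow (hs : s ≠ 0) (hr : 0 < r) :
    hardyGreenProfile d s γ A B r =
      (∑ i, ![1, A + B, A * B] i * (r ^ (2 * s)) ^ ![0, γ / (2 * s), 2 * (γ / (2 * s))] i) *
        (r ^ (2 * s)) ^ (1 - d / (2 * s)) := by
  have hd : 2 * s * (1 - d / (2 * s)) = -(d - 2 * s) := by field_simp; ring
  have hγ : 2 * s * (γ / (2 * s)) = γ := by field_simp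
  have hγγ : 2 * s * (2 * (γ / (2 * s))) = 2 * γ := by field_simp
  have hone : r ^ (-(d - 2 * s - γ)) = r ^ γ * r ^ (-(d - 2 * s)) := by
    rw [← rpow_add hr]
    ring_nf
  have htwo : r ^ (-(d - 2 * s - 2 * γ)) = r ^ (2 * γ) * r ^ (-(d - 2 * s)) := by
    rw [← rpow_add hr]
    ring_nf
  simp only [hardyGreenProfile, Fin.sum_univ_three, Matrix.cons_val, ← rpow_mul hr.le, mul_zero,
    rpow_zero, hd, hγ, hγγ, hone, htwo]
  ring

lemma hardyExponents_mem_Ioo (hs : 0 < s) (hd : 2 * s < d) (hγ : -(2 * s) < γ)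
    (hγd : γ < (d - 2 * s) / 2) (i : Fin 3) :
    ![0, γ / (2 * s), 2 * (γ / (2 * s))] i ∈ Ioo (-2) (d / (2 * s) - 1) := by
  have h2s : 0 < 2 * s := by positivity
  have hd' : 1 < d / (2 * s) := (one_lt_div h2s).2 hd
  have hγ' : -1 < γ / (2 * s) := (lt_div_iff₀ h2s).2 (by linarith)
  have hγd' : 2 * (γ / (2 * s)) + 1 < d / (2 * s) := by
    rw [← mul_div_assoc, div_add_one h2s.ne']
    exact div_lt_div_of_pos_right (by linarith) h2s
  fin_cases i <;> constructor <;> simp only [Fin.reduceFinMk, Matrix.cons_val] <;> linarith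

theorem heat_kernel_time_integral_two_sided_general (hs : 0 < s) (hd : 2 * s < d)
    (hγ : -(2 * s) < γ) (hγd : γ < (d - 2 * s) / 2) :
    ∃ C, 1 ≤ C ∧ ∀ A B r : ℝ, 0 ≤ A → 0 ≤ B → 0 < r →
      IntegrableOn (hardyHeatProfile d s γ A B r) (Ioi 0) ∧
      C⁻¹ * hardyGreenProfile d s γ A B r ≤ ∫ t in Ioi 0, hardyHeatProfile d s γ A B r t ∧
      ∫ t in Ioi 0, hardyHeatProfile d s γ A B r t ≤ C * hardyGreenProfile d s γ A B r := by
  have ha := hardyExponents_mem_Ioo hs hd hγ hγd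
  obtain ⟨C, hC, hbound⟩ := exists_one_le_forall_integral_sum_rpow_mul_stableProfile_mem_Icc ha
  refine ⟨C, hC, fun A B r hA hB hr => ?_⟩
  have hT : 0 < r ^ (2 * s) := rpow_pos_of_pos hr _
  have hw : ∀ i, 0 ≤ ![1, A + B, A * B] i := by
    simp [Fin.forall_fin_succ, add_nonneg hA hB, mul_nonneg hA hB]
  have heat_eq : EqOn (hardyHeatProfile d s γ A B r) _ (Ioi 0) :=
    fun t ht => hardyHeatProfile_eq_sum_mul_stableProfile hs.ne' hr ht
  rw [integrableOn_congr_fun heat_eq measurableSet_Ioi,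
    setIntegral_congr_fun measurableSet_Ioi heat_eq, hardyGreenProfile_eq_sum_mul_rpow hs.ne' hr]
  exact ⟨integrableOn_sum_rpow_mul_stableProfile ha _ hT, hbound _ _ hw hT⟩

end HardyProfile

theorem heat_kernel_time_integral_two_sided
    (N : ℕ) (s γ : ℝ) (hs : s ∈ Set.Ioo (0:ℝ) 1)
    (hN : 2 * s < (N : ℝ)) (hγ : γ ∈ Set.Ioo (0:ℝ) (((N : ℝ) - 2*s)/2)) :
    ∃ C : ℝ, 1 ≤ C ∧ ∀ x y : EuclideanSpace ℝ (Fin N), x ≠ 0 → y ≠ 0 → x ≠ y →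
      IntegrableOn
        (fun t : ℝ => (1 + t ^ (γ/(2*s)) * ‖x‖ ^ (-γ)) * (1 + t ^ (γ/(2*s)) * ‖y‖ ^ (-γ)) *
          min (t ^ (-((N : ℝ)/(2*s)))) (t * ‖x - y‖ ^ (-((N : ℝ) + 2*s))))
        (Set.Ioi 0) ∧
      C⁻¹ * Hker N s γ x y ≤
        (∫ t in Set.Ioi (0:ℝ),
          (1 + t ^ (γ/(2*s)) * ‖x‖ ^ (-γ)) * (1 + t ^ (γ/(2*s)) * ‖y‖ ^ (-γ)) *
          min (t ^ (-((N : ℝ)/(2*s)))) (t * ‖x - y‖ ^ (-((N : ℝ) + 2*s)))) ∧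
      (∫ t in Set.Ioi (0:ℝ),
          (1 + t ^ (γ/(2*s)) * ‖x‖ ^ (-γ)) * (1 + t ^ (γ/(2*s)) * ‖y‖ ^ (-γ)) *
          min (t ^ (-((N : ℝ)/(2*s)))) (t * ‖x - y‖ ^ (-((N : ℝ) + 2*s)))) ≤
        C * Hker N s γ x y := by
  obtain ⟨C, hC, hbound⟩ := heat_kernel_time_integral_two_sided_general hs.1 hN
    (by linarith [hs.1, hγ.1]) hγ.2
  exact ⟨C, hC, fun x y _ _ hxy => hbound _ _ _ (by positivity) (by positivity)
    (norm_sub_pos_iff.2 hxy)⟩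
end

section
/- For every compact set K ⊂ ℝ^N and every R > 0 there exists a constant C > 0 such that for all x ∈ ℝ^N with 0 < |x| ≤ R, one has ∫_K H(x,y) dy ≤ C·|x|^{−γ}. -/
/-!
For `0 < u ≤ L` a negative power may be traded for a stronger singularity:
`u ^ (-p) ≤ L ^ (r - p) * u ^ (-r)` when `p ≤ r`. Bounding in this way the power of the smaller of
two numbers `u, v ≤ L`, with the larger one in place of `L`, gives
`u ^ (-p) * v ^ (-q) ≤ L ^ (r - (p + q)) * (u ^ (-r) + v ^ (-r))` as soon as `p`, `q`, `p + q ≤ r`.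
With `a = N - 2s` and `r = max a γ < N` this applies to all four terms of the kernel, so that
`H(x,y) ≤ C |x|^{-γ} (|y|^{-r} + |x - y|^{-r})` on bounded sets. Both powers are integrable on balls
around their singularity, and the integral of the second does not depend on `x` by translation
invariance.
-/

open MeasureTheory Real Set

open Metric Module

section RealPowers

variable {t u v L p q r α γ : ℝ}

lemma rpow_neg_le_mul_rpow_neg (ht : 0 < t) (htL : t ≤ L) (hα : α ≤ γ) :
    t ^ (-α) ≤ L ^ (γ - α) * t ^ (-γ) :=
  calc t ^ (-α)
      = t ^ (γ - α) * t ^ (-γ) := by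
        rw [← rpow_add ht]
        ring_nf
    _ ≤ L ^ (γ - α) * t ^ (-γ) := by gcongr

lemma rpow_neg_mul_rpow_neg_le_of_le (hv : 0 < v) (hvu : v ≤ u) (huL : u ≤ L) (hq : q ≤ r)
    (hpq : p + q ≤ r) : u ^ (-p) * v ^ (-q) ≤ L ^ (r - (p + q)) * v ^ (-r) := by
  have hu : 0 < u := hv.trans_le hvu
  calc u ^ (-p) * v ^ (-q)
      ≤ u ^ (-p) * (u ^ (r - q) * v ^ (-r)) := by
        gcongr
        exact rpow_neg_le_mul_rpow_neg hv hvu hq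
    _ = u ^ (r - (p + q)) * v ^ (-r) := by
        rw [← mul_assoc, ← rpow_add hu]
        ring_nf
    _ ≤ L ^ (r - (p + q)) * v ^ (-r) := by gcongr

lemma rpow_neg_mul_rpow_neg_le (hu : 0 < u) (hv : 0 < v) (huL : u ≤ L) (hvL : v ≤ L) (hp : p ≤ r)
    (hq : q ≤ r) (hpq : p + q ≤ r) :
    u ^ (-p) * v ^ (-q) ≤ L ^ (r - (p + q)) * (u ^ (-r) + v ^ (-r)) := by
  have hL : 0 < L := hu.trans_le huL
  rcases le_total v u with hvu | huv
  · calc u ^ (-p) * v ^ (-q)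
        ≤ L ^ (r - (p + q)) * v ^ (-r) := rpow_neg_mul_rpow_neg_le_of_le hv hvu huL hq hpq
      _ ≤ L ^ (r - (p + q)) * (u ^ (-r) + v ^ (-r)) := by
          gcongr
          exact le_add_of_nonneg_left (by positivity)
  · calc u ^ (-p) * v ^ (-q)
        = v ^ (-q) * u ^ (-p) := mul_comm _ _
      _ ≤ L ^ (r - (q + p)) * u ^ (-r) :=
          rpow_neg_mul_rpow_neg_le_of_le hu huv hvL hp (by linarith)
      _ ≤ L ^ (r - (p + q)) * (u ^ (-r) + v ^ (-r)) := by
          rw [add_comm q p]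
          gcongr
          exact le_add_of_nonneg_right (by positivity)

lemma rpow_neg_mul_rpow_neg_mul_rpow_neg_le (ht : 0 < t) (hu : 0 < u) (hv : 0 < v) (htL : t ≤ L)
    (huL : u ≤ L) (hvL : v ≤ L) (hα : α ≤ γ) (hp : p ≤ r) (hq : q ≤ r) (hpq : p + q ≤ r) :
    t ^ (-α) * (u ^ (-p) * v ^ (-q)) ≤
      L ^ (r + γ - (α + p + q)) * t ^ (-γ) * (u ^ (-r) + v ^ (-r)) := by
  have hL : 0 < L := ht.trans_le htL
  calc t ^ (-α) * (u ^ (-p) * v ^ (-q))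
      ≤ L ^ (γ - α) * t ^ (-γ) * (L ^ (r - (p + q)) * (u ^ (-r) + v ^ (-r))) := by
        gcongr ?_ * ?_
        · exact rpow_neg_le_mul_rpow_neg ht htL hα
        · exact rpow_neg_mul_rpow_neg_le hu hv huL hvL hp hq hpq
    _ = L ^ (γ - α) * L ^ (r - (p + q)) * t ^ (-γ) * (u ^ (-r) + v ^ (-r)) := by ring
    _ = L ^ (r + γ - (α + p + q)) * t ^ (-γ) * (u ^ (-r) + v ^ (-r)) := by
        rw [← rpow_add hL]
        ring_nf

end RealPowers

section Kernel

variable {E : Type*} [NormedAddCommGroup E]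

/-- The kernel `H` of the two-sided Green function estimate on a normed group, with `a` in place of
`N - 2s`. -/
noncomputable def comparisonKernel (a γ : ℝ) (x y : E) : ℝ :=
  ‖x - y‖ ^ (-a) + (‖x‖ ^ (-γ) + ‖y‖ ^ (-γ)) * ‖x - y‖ ^ (-(a - γ)) +
    ‖x‖ ^ (-γ) * ‖y‖ ^ (-γ) * ‖x - y‖ ^ (-(a - 2 * γ))

lemma comparisonKernel_le {a γ r L : ℝ} (hγ : 0 ≤ γ) (har : a ≤ r) (hγr : γ ≤ r) {x y : E}
    (hx : x ≠ 0) (hy : y ≠ 0) (hxy : x ≠ y) (hxL : ‖x‖ ≤ L) (hyL : ‖y‖ ≤ L) (hxyL : ‖x - y‖ ≤ L) :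
    comparisonKernel a γ x y ≤
      4 * L ^ (r + γ - a) * ‖x‖ ^ (-γ) * (‖y‖ ^ (-r) + ‖x - y‖ ^ (-r)) := by
  set B := L ^ (r + γ - a) * ‖x‖ ^ (-γ) * (‖y‖ ^ (-r) + ‖x - y‖ ^ (-r)) with hB
  have term_le {α p q : ℝ} (hα : α ≤ γ) (hp : p ≤ r) (hq : q ≤ r) (hpq : p + q ≤ r)
      (ha : α + p + q = a) : ‖x‖ ^ (-α) * (‖y‖ ^ (-p) * ‖x - y‖ ^ (-q)) ≤ B := by
    rw [hB, ← ha]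
    exact rpow_neg_mul_rpow_neg_mul_rpow_neg_le (norm_pos_iff.mpr hx) (norm_pos_iff.mpr hy)
      (norm_sub_pos_iff.mpr hxy) hxL hyL hxyL hα hp hq hpq
  calc comparisonKernel a γ x y
      = ‖x‖ ^ (-0 : ℝ) * (‖y‖ ^ (-0 : ℝ) * ‖x - y‖ ^ (-a)) +
          ‖x‖ ^ (-γ) * (‖y‖ ^ (-0 : ℝ) * ‖x - y‖ ^ (-(a - γ))) +
          ‖x‖ ^ (-0 : ℝ) * (‖y‖ ^ (-γ) * ‖x - y‖ ^ (-(a - γ))) +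
          ‖x‖ ^ (-γ) * (‖y‖ ^ (-γ) * ‖x - y‖ ^ (-(a - 2 * γ))) := by
        simp only [comparisonKernel, neg_zero, rpow_zero]
        ring
    _ ≤ B + B + B + B := by
        refine add_le_add (add_le_add (add_le_add ?_ ?_) ?_) ?_ <;> apply term_le <;> linarith
    _ = 4 * L ^ (r + γ - a) * ‖x‖ ^ (-γ) * (‖y‖ ^ (-r) + ‖x - y‖ ^ (-r)) := by ring

end Kernel

section Integrals

variable {E : Type*} [NormedAddCommGroup E] [NormedSpace ℝ E] [FiniteDimensional ℝ E]
  [MeasurableSpace E] [BorelSpace E] {μ : Measure E} [μ.IsAddHaarMeasure]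

lemma setLIntegral_ball_norm_rpow_neg_ne_top [Nontrivial E] {r : ℝ} (hr : r < finrank ℝ E) (L : ℝ) :
    ∫⁻ y in ball (0 : E) L, ENNReal.ofReal (‖y‖ ^ (-r)) ∂μ ≠ ⊤ := by
  have h : IntegrableOn (fun y : E ↦ ‖y‖ ^ (-r)) (ball 0 L) μ := by
    refine integrableOn_ball_of_norm_le_rpow (C := 1) finrank_pos hr (ae_of_all _ fun y ↦ ?_)
      (measurable_norm.pow_const _).aestronglyMeasurable
    rw [norm_of_nonneg (by positivity), one_mul]
  exact h.lintegral_lt_top.ne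

lemma setLIntegral_ball_comp_sub_left (f : E → ENNReal) (x : E) (L : ℝ) :
    ∫⁻ y in ball x L, f (x - y) ∂μ = ∫⁻ y in ball 0 L, f y ∂μ := by
  have hpre : (x - ·) ⁻¹' ball (0 : E) L = ball x L := by
    ext y
    rw [mem_preimage, mem_ball_zero_iff, mem_ball_iff_norm']
  rw [← hpre]
  exact (μ.measurePreserving_sub_left x).setLIntegral_comp_preimage_emb
    (MeasurableEquiv.subLeft x).measurableEmbedding f _

lemma setLIntegral_norm_rpow_add_norm_sub_rpow_le {K : Set E} {x : E} {L : ℝ} (hK : K ⊆ ball 0 L)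
    (hKx : K ⊆ ball x L) (r : ℝ) :
    ∫⁻ y in K, ENNReal.ofReal (‖y‖ ^ (-r) + ‖x - y‖ ^ (-r)) ∂μ ≤
      2 * ∫⁻ y in ball 0 L, ENNReal.ofReal (‖y‖ ^ (-r)) ∂μ := by
  set f : E → ENNReal := fun y ↦ ENNReal.ofReal (‖y‖ ^ (-r))
  calc ∫⁻ y in K, ENNReal.ofReal (‖y‖ ^ (-r) + ‖x - y‖ ^ (-r)) ∂μ
      = ∫⁻ y in K, (f y + f (x - y)) ∂μ := by
        congr! 2 with y
        exact ENNReal.ofReal_add (by positivity) (by positivity)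
    _ = ∫⁻ y in K, f y ∂μ + ∫⁻ y in K, f (x - y) ∂μ := lintegral_add_left (by fun_prop) _
    _ ≤ ∫⁻ y in ball 0 L, f y ∂μ + ∫⁻ y in ball x L, f (x - y) ∂μ := by gcongr
    _ = 2 * ∫⁻ y in ball 0 L, f y ∂μ := by rw [setLIntegral_ball_comp_sub_left, two_mul]

lemma setLIntegral_comparisonKernel_le [Nontrivial E] {a γ r L : ℝ} (hγ : 0 ≤ γ) (har : a ≤ r)
    (hγr : γ ≤ r) {K : Set E} {x : E} (hx : x ≠ 0) (hxL : ‖x‖ ≤ L) (hK : K ⊆ ball 0 L)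
    (hKx : K ⊆ ball x L) :
    ∫⁻ y in K, ENNReal.ofReal (comparisonKernel a γ x y) ∂μ ≤
      ENNReal.ofReal (4 * L ^ (r + γ - a) * ‖x‖ ^ (-γ)) *
        (2 * ∫⁻ y in ball 0 L, ENNReal.ofReal (‖y‖ ^ (-r)) ∂μ) := by
  have hL : 0 < L := (norm_pos_iff.mpr hx).trans_le hxL
  calc ∫⁻ y in K, ENNReal.ofReal (comparisonKernel a γ x y) ∂μ
      ≤ ∫⁻ y in K, ENNReal.ofReal (4 * L ^ (r + γ - a) * ‖x‖ ^ (-γ)) *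
          ENNReal.ofReal (‖y‖ ^ (-r) + ‖x - y‖ ^ (-r)) ∂μ := by
        refine setLIntegral_mono_ae (by fun_prop) ?_
        filter_upwards [μ.ae_ne 0, μ.ae_ne x] with y hy hyx hyK
        rw [← ENNReal.ofReal_mul (by positivity)]
        exact ENNReal.ofReal_le_ofReal <| comparisonKernel_le hγ har hγr hx hy hyx.symm hxL
          (mem_ball_zero_iff.mp (hK hyK)).le (mem_ball_iff_norm'.mp (hKx hyK)).le
    _ = ENNReal.ofReal (4 * L ^ (r + γ - a) * ‖x‖ ^ (-γ)) *
          ∫⁻ y in K, ENNReal.ofReal (‖y‖ ^ (-r) + ‖x - y‖ ^ (-r)) ∂μ :=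
        lintegral_const_mul _ (by fun_prop)
    _ ≤ _ := by
        gcongr
        exact setLIntegral_norm_rpow_add_norm_sub_rpow_le hK hKx r

theorem green_kernel_interior_bound_general {a γ : ℝ} (ha : a < finrank ℝ E) (hγ0 : 0 ≤ γ)
    (hγ : γ < finrank ℝ E) {K : Set E} (hK : Bornology.IsBounded K) {R : ℝ} (hR : 0 < R) :
    ∃ C : ℝ, 0 < C ∧ ∀ x : E, x ≠ 0 → ‖x‖ ≤ R →
      ∫⁻ y in K, ENNReal.ofReal (comparisonKernel a γ x y) ∂μ ≤
        ENNReal.ofReal (C * ‖x‖ ^ (-γ)) := by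
  have : Nontrivial E := nontrivial_of_finrank_pos (R := ℝ) (by exact_mod_cast hγ0.trans_lt hγ)
  obtain ⟨M, hM, hKM⟩ := hK.exists_pos_norm_lt
  set L := R + M
  set r := max a γ
  set I := ∫⁻ y in ball (0 : E) L, ENNReal.ofReal (‖y‖ ^ (-r)) ∂μ
  have hI : I ≠ ⊤ := setLIntegral_ball_norm_rpow_neg_ne_top (max_lt ha hγ) L
  refine ⟨4 * L ^ (r + γ - a) * (2 * I.toReal + 1), by positivity, fun x hx hxR ↦ ?_⟩
  have hK0 : K ⊆ ball 0 L := fun y hy ↦ mem_ball_zero_iff.mpr (by linarith [hKM y hy])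
  have hKx : K ⊆ ball x L := fun y hy ↦
    mem_ball_iff_norm'.mpr (by linarith [hKM y hy, norm_sub_le x y])
  calc ∫⁻ y in K, ENNReal.ofReal (comparisonKernel a γ x y) ∂μ
      ≤ ENNReal.ofReal (4 * L ^ (r + γ - a) * ‖x‖ ^ (-γ)) * (2 * I) :=
        setLIntegral_comparisonKernel_le hγ0 (le_max_left a γ) (le_max_right a γ) hx
          (by linarith) hK0 hKx
    _ = ENNReal.ofReal (4 * L ^ (r + γ - a) * ‖x‖ ^ (-γ) * (2 * I.toReal)) := by
        rw [ENNReal.ofReal_mul (p := _ * _ ^ (-γ)) (by positivity), ENNReal.ofReal_mul zero_le_two,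
          ENNReal.ofReal_toReal hI, ENNReal.ofReal_ofNat]
    _ ≤ ENNReal.ofReal (4 * L ^ (r + γ - a) * (2 * I.toReal + 1) * ‖x‖ ^ (-γ)) := by
        rw [mul_right_comm]
        gcongr
        exact le_add_of_nonneg_right zero_le_one

end Integrals

theorem green_kernel_interior_bound
    (N : ℕ) (s γ : ℝ) (hs : s ∈ Set.Ioo (0:ℝ) 1)
    (hN : 2 * s < (N : ℝ)) (hγ : γ ∈ Set.Ioo (0:ℝ) (((N : ℝ) - 2*s)/2))
    (K : Set (EuclideanSpace ℝ (Fin N))) (hK : IsCompact K) (R : ℝ) (hR : 0 < R) :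
    ∃ C : ℝ, 0 < C ∧ ∀ x : EuclideanSpace ℝ (Fin N), x ≠ 0 → ‖x‖ ≤ R →
      ∫⁻ y in K, ENNReal.ofReal (Hker N s γ x y) ≤
        ENNReal.ofReal (C * ‖x‖ ^ (-γ)) :=
  green_kernel_interior_bound_general (a := N - 2 * s) (by simpa using hs.1) hγ.1.le
    (by simpa using by linarith [hs.1, hγ.2]) hK.isBounded hR
end

section
/- Let Φ : (ℝ^N \ {0}) × (ℝ^N \ {0}) → [0,∞) be measurable with Φ(z,y) ≤ C₀·H(z,y) for some C₀ > 0 and all z ≠ y (z, y ≠ 0), and suppose that for every z ≠ 0 the map y ↦ Φ(z,y) is continuous on ℝ^N \ {0, z}. Let g : ℝ^N → ℝ be measurable with |g(z)| ≤ C₁·( 1/(1 + |z|^{N+2s}) + |z|^{−2s}·χ_K(z) ) for some C₁ > 0 and some compact K ⊂ ℝ^N. Then the map y ↦ ∫_{ℝ^N} Φ(z,y)·g(z) dz is continuous at every point x ∈ ℝ^N \ {0}. -/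
open MeasureTheory Real Set

/-!
In general no integrable function dominates `z ↦ Φ z y * g z` for all `y` near `x ≠ 0`: the
singularity `‖z - y‖ ^ (-(N - 2s))` moves with `y`. Let `‖y‖ ≥ 2ρ`. Where `‖z - y‖ < ρ`, both `‖z‖`
and `‖y‖` exceed `‖z - y‖`, so the kernel is at most `4 ‖z - y‖ ^ (-(N - 2s))`, and the source is
bounded; elsewhere the kernel is at most a constant times `1 + ‖z‖ ^ (-γ)`. Hence the integrand is
bounded by `W z + k (z - y)` with `W` and `k` integrable, thanks to `2s + γ < N` and `N - 2s < N`.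
Translation is continuous in `L¹`, so these dominators converge in `L¹` as `y → x`, which is enough
for dominated convergence.
-/

open Filter Topology Module

section DominatedConvergence

variable {α ι G : Type*} [MeasurableSpace α] {μ : Measure α}
  [NormedAddCommGroup G] [NormedSpace ℝ G]

/- Pointwise, `‖F i - f‖ ≤ min ‖F i - f‖ (2 h₀) + ‖h i - h₀‖`; ordinary dominated convergence
applies to the first term. -/
lemma tendsto_integral_of_tendsto_dominator {l : Filter ι} [l.IsCountablyGenerated]
    {F : ι → α → G} {f : α → G} {h : ι → α → ℝ} {h₀ : α → ℝ}
    (hF : ∀ᶠ i in l, AEStronglyMeasurable (F i) μ) (hf : AEStronglyMeasurable f μ)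
    (hFh : ∀ᶠ i in l, ∀ᵐ z ∂μ, ‖F i z‖ ≤ h i z) (hfh : ∀ᵐ z ∂μ, ‖f z‖ ≤ h₀ z)
    (hh : ∀ᶠ i in l, Integrable (h i) μ) (hh₀ : Integrable h₀ μ)
    (hlim : Tendsto (fun i => ∫ z, ‖h i z - h₀ z‖ ∂μ) l (𝓝 0))
    (hFf : ∀ᵐ z ∂μ, Tendsto (F · z) l (𝓝 (f z))) :
    Tendsto (fun i => ∫ z, F i z ∂μ) l (𝓝 (∫ z, f z ∂μ)) := by
  have hmeas : ∀ᶠ i in l, AEStronglyMeasurable (fun z => min ‖F i z - f z‖ (2 * h₀ z)) μ := by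
    filter_upwards [hF] with i hFi
    exact (hFi.sub hf).norm.inf (hh₀.const_mul 2).aestronglyMeasurable
  have hbound (i : ι) : ∀ᵐ z ∂μ, ‖min ‖F i z - f z‖ (2 * h₀ z)‖ ≤ 2 * h₀ z := by
    filter_upwards [hfh] with z hz
    have := (norm_nonneg _).trans hz
    rw [Real.norm_of_nonneg (by positivity)]
    exact min_le_right _ _
  have hmin : Tendsto (fun i => ∫ z, min ‖F i z - f z‖ (2 * h₀ z) ∂μ) l (𝓝 0) := by
    rw [← integral_zero α ℝ (μ := μ)]
    refine tendsto_integral_filter_of_dominated_convergence (fun z => 2 * h₀ z) hmeas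
      (.of_forall hbound) (hh₀.const_mul 2) ?_
    filter_upwards [hfh, hFf] with z hz hlimz
    have h2 : 0 ≤ 2 * h₀ z := by linarith [norm_nonneg (f z)]
    simpa [min_eq_left h2] using (tendsto_iff_norm_sub_tendsto_zero.1 hlimz).min
      (tendsto_const_nhds (x := 2 * h₀ z))
  rw [tendsto_iff_norm_sub_tendsto_zero]
  refine squeeze_zero' (.of_forall fun _ => norm_nonneg _) ?_
    (by simpa only [add_zero] using hmin.add hlim)
  filter_upwards [hF, hFh, hh, hmeas] with i hFi hFhi hhi hmeasi
  have hmin_int : Integrable (fun z => min ‖F i z - f z‖ (2 * h₀ z)) μ :=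
    (hh₀.const_mul 2).mono' hmeasi (hbound i)
  have hdiff_int : Integrable (fun z => ‖h i z - h₀ z‖) μ := (hhi.sub hh₀).norm
  rw [← integral_sub (hhi.mono' hFi hFhi) (hh₀.mono' hf hfh), ← integral_add hmin_int hdiff_int]
  refine norm_integral_le_of_norm_le (hmin_int.add hdiff_int) ?_
  filter_upwards [hFhi, hfh] with z hz hz₀
  rcases min_cases ‖F i z - f z‖ (2 * h₀ z) with ⟨hmin_eq, -⟩ | ⟨hmin_eq, -⟩ <;> rw [hmin_eq]
  · exact le_add_of_nonneg_right (norm_nonneg _)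
  · linarith [norm_sub_le (F i z) (f z), Real.le_norm_self (h i z - h₀ z)]

end DominatedConvergence

section Translation

variable {E G : Type*} [NormedAddCommGroup E] [MeasurableSpace E] [BorelSpace E] {μ : Measure E}
  [IsLocallyFiniteMeasure μ] [μ.InnerRegularCompactLTTop] [μ.IsAddLeftInvariant]
  [NormedAddCommGroup G]

lemma tendsto_integral_norm_translate_sub {k : E → G} (hk : Integrable k μ) (x : E) :
    Tendsto (fun y => ∫ z, ‖k (z - y) - k (z - x)‖ ∂μ) (𝓝 x) (𝓝 0) := by
  have : Fact ((1 : ENNReal) ≠ ⊤) := ⟨ENNReal.one_ne_top⟩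
  have hk1 : MemLp k 1 μ := memLp_one_iff_integrable.2 hk
  have hcont : Continuous fun y : E => DomAddAct.mk (-y) +ᵥ hk1.toLp k :=
    (DomAddAct.continuous_mk.comp continuous_neg).vadd continuous_const
  refine (tendsto_iff_norm_sub_tendsto_zero.1 (hcont.tendsto x)).congr fun y => ?_
  rw [DomAddAct.mk_vadd_toLp, DomAddAct.mk_vadd_toLp, ← MemLp.toLp_sub, L1.norm_eq_integral_norm]
  refine integral_congr_ae ((MemLp.coeFn_toLp _).fun_comp (‖·‖) |>.trans (.of_eq ?_))
  simp only [Function.comp_def, Pi.sub_apply, vadd_eq_add, neg_add_eq_sub]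

variable [NormedSpace ℝ G]

lemma continuousAt_integral_of_norm_le_add_translate {F : E → E → G} {W k : E → ℝ} {x : E}
    (hF : ∀ᶠ y in 𝓝 x, AEStronglyMeasurable (F · y) μ) (hW : Integrable W μ) (hk : Integrable k μ)
    (hFWk : ∀ᶠ y in 𝓝 x, ∀ᵐ z ∂μ, ‖F z y‖ ≤ W z + k (z - y))
    (hcont : ∀ᵐ z ∂μ, ContinuousAt (F z) x) :
    ContinuousAt (fun y => ∫ z, F z y ∂μ) x := by
  have hint (y : E) : Integrable (fun z => W z + k (z - y)) μ := hW.add (hk.comp_sub_right y)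
  refine tendsto_integral_of_tendsto_dominator hF hF.self_of_nhds hFWk hFWk.self_of_nhds
    (.of_forall hint) (hint x) ?_ hcont
  simpa only [add_sub_add_left_eq_sub] using tendsto_integral_norm_translate_sub hk x

end Translation

section NormPower

lemma one_add_rpow_le_two_rpow_mul {p t : ℝ} (hp : 0 ≤ p) (ht : 0 ≤ t) :
    (1 + t) ^ p ≤ 2 ^ p * (1 + t ^ p) := by
  have htp : 0 ≤ t ^ p := rpow_nonneg ht p
  have hmax : max 1 t ^ p ≤ 1 + t ^ p := by
    rcases max_cases 1 t with ⟨h, -⟩ | ⟨h, -⟩ <;> rw [h]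
    · rw [one_rpow]; linarith
    · linarith
  calc (1 + t) ^ p ≤ (2 * max 1 t) ^ p := by
        gcongr
        linarith [le_max_left 1 t, le_max_right 1 t]
    _ = 2 ^ p * max 1 t ^ p := mul_rpow zero_le_two (by positivity)
    _ ≤ 2 ^ p * (1 + t ^ p) := by gcongr

variable {E : Type*} [NormedAddCommGroup E]

/-- The pointwise majorant of a source term: decay of order `p` at infinity, plus a singularity of
order `q` at the origin cut off to the set `K`. -/
noncomputable def sourceMajorant (p q : ℝ) (K : Set E) (z : E) : ℝ :=
  1 / (1 + ‖z‖ ^ p) + ‖z‖ ^ (-q) * K.indicator 1 z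

lemma one_div_one_add_norm_rpow_le_one (p : ℝ) (z : E) : 1 / (1 + ‖z‖ ^ p) ≤ 1 :=
  div_le_one_of_le₀ (le_add_of_nonneg_right (by positivity)) (by positivity)

lemma norm_rpow_mul_indicator_nonneg (b : ℝ) (K : Set E) (z : E) :
    0 ≤ ‖z‖ ^ b * K.indicator 1 z :=
  mul_nonneg (by positivity) (indicator_nonneg (fun _ _ => zero_le_one) z)

lemma sourceMajorant_nonneg (p q : ℝ) (K : Set E) (z : E) : 0 ≤ sourceMajorant p q K z :=
  add_nonneg (by positivity) (norm_rpow_mul_indicator_nonneg _ K z)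

lemma sourceMajorant_mono {K L : Set E} (hKL : K ⊆ L) (p q : ℝ) (z : E) :
    sourceMajorant p q K z ≤ sourceMajorant p q L z := by
  have : K.indicator (1 : E → ℝ) z ≤ L.indicator 1 z :=
    indicator_le_indicator_of_subset hKL (fun _ => zero_le_one) z
  unfold sourceMajorant
  gcongr

lemma sourceMajorant_le {q m : ℝ} (hq : 0 ≤ q) (hm : 0 < m) (p : ℝ) (K : Set E) {z : E}
    (hz : m ≤ ‖z‖) : sourceMajorant p q K z ≤ 1 + m ^ (-q) := by
  have hK : K.indicator (1 : E → ℝ) z ≤ 1 := indicator_le_self' (fun _ _ => zero_le_one) z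
  refine add_le_add (one_div_one_add_norm_rpow_le_one p z) ?_
  exact (mul_le_of_le_one_right (by positivity) hK).trans
    (rpow_le_rpow_of_nonpos hm hz (by linarith))

variable [NormedSpace ℝ E] [FiniteDimensional ℝ E] [MeasurableSpace E] [BorelSpace E]
  {μ : Measure E} [μ.IsAddHaarMeasure]

lemma integrable_norm_rpow_mul_indicator_ball {b : ℝ} (hb : b < finrank ℝ E)
    (R : ℝ) :
    Integrable (fun z : E => ‖z‖ ^ (-b) * (Metric.ball 0 R).indicator 1 z) μ := by
  rcases subsingleton_or_nontrivial E with _ | _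
  · exact .of_finite
  have hball : IntegrableOn (fun z : E => ‖z‖ ^ (-b)) (Metric.ball 0 R) μ := by
    refine integrableOn_ball_of_norm_le_rpow finrank_pos hb (C := 1) (.of_forall fun z => ?_)
      (by fun_prop : Measurable fun z : E => ‖z‖ ^ (-b)).aestronglyMeasurable
    rw [Real.norm_of_nonneg (by positivity), one_mul]
  refine (hball.integrable_indicator measurableSet_ball).congr (.of_forall fun z => ?_)
  by_cases hz : z ∈ Metric.ball 0 R <;> simp [hz]

lemma integrable_one_div_one_add_norm_rpow {p : ℝ} (hp : finrank ℝ E < p) :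
    Integrable (fun z : E => 1 / (1 + ‖z‖ ^ p)) μ := by
  have hmeas : Measurable fun z : E => 1 / (1 + ‖z‖ ^ p) := by fun_prop
  refine ((integrable_one_add_norm hp).const_mul (2 ^ p)).mono' hmeas.aestronglyMeasurable
    (.of_forall fun z => ?_)
  rw [Real.norm_of_nonneg (by positivity), rpow_neg (by positivity), ← div_eq_mul_inv,
    div_le_div_iff₀ (by positivity) (by positivity), one_mul]
  exact one_add_rpow_le_two_rpow_mul ((Nat.cast_nonneg _).trans hp.le) (norm_nonneg z)

lemma integrable_norm_rpow_mul_one_div_one_add_norm_rpow {b p : ℝ}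
    (hb₀ : 0 ≤ b) (hb : b < finrank ℝ E) (hp : finrank ℝ E < p) :
    Integrable (fun z : E => ‖z‖ ^ (-b) * (1 / (1 + ‖z‖ ^ p))) μ := by
  have hmeas : Measurable fun z : E => ‖z‖ ^ (-b) * (1 / (1 + ‖z‖ ^ p)) := by fun_prop
  refine ((integrable_norm_rpow_mul_indicator_ball hb 1).add
    (integrable_one_div_one_add_norm_rpow hp)).mono' hmeas.aestronglyMeasurable
    (.of_forall fun z => ?_)
  rw [Real.norm_of_nonneg (by positivity), Pi.add_apply]
  by_cases hz : z ∈ Metric.ball (0 : E) 1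
  · rw [indicator_of_mem hz, Pi.one_apply]
    refine le_add_of_le_of_nonneg ?_ (by positivity)
    gcongr
    exact one_div_one_add_norm_rpow_le_one p z
  · refine le_add_of_nonneg_of_le (norm_rpow_mul_indicator_nonneg _ _ z) ?_
    refine mul_le_of_le_one_left (by positivity) ?_
    exact rpow_le_one_of_one_le_of_nonpos (by simpa using hz) (by linarith)

lemma integrable_norm_rpow_mul_sourceMajorant_ball {b p q : ℝ} (hb₀ : 0 ≤ b)
    (hb : b < finrank ℝ E) (hbq : b + q < finrank ℝ E) (hp : finrank ℝ E < p)
    (R : ℝ) :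
    Integrable (fun z : E => ‖z‖ ^ (-b) * sourceMajorant p q (Metric.ball 0 R) z) μ := by
  have hsing : Integrable
      (fun z : E => ‖z‖ ^ (-b) * (‖z‖ ^ (-q) * (Metric.ball 0 R).indicator 1 z)) μ := by
    have hind : Measurable ((Metric.ball (0 : E) R).indicator (1 : E → ℝ)) :=
      measurable_one.indicator measurableSet_ball
    refine (integrable_norm_rpow_mul_indicator_ball hbq R).mono'
      (by fun_prop) (.of_forall fun z => ?_)
    have hind₀ : 0 ≤ (Metric.ball (0 : E) R).indicator (1 : E → ℝ) z :=
      indicator_nonneg (fun _ _ => zero_le_one) z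
    rw [Real.norm_of_nonneg (by positivity), ← mul_assoc, neg_add]
    gcongr
    exact le_rpow_add (norm_nonneg z) _ _
  simp only [sourceMajorant, mul_add]
  exact (integrable_norm_rpow_mul_one_div_one_add_norm_rpow hb₀ hb hp).add hsing

end NormPower

section Kernel

variable {N : ℕ} {s γ : ℝ} {z y : EuclideanSpace ℝ (Fin N)}

lemma Hker_le_of_norm_sub_le_norm (hγ : 0 ≤ γ) (hzy : z ≠ y) (hz : ‖z - y‖ ≤ ‖z‖)
    (hy : ‖z - y‖ ≤ ‖y‖) : Hker N s γ z y ≤ 4 * ‖z - y‖ ^ (-((N : ℝ) - 2 * s)) := by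
  have hd : 0 < ‖z - y‖ := norm_pos_iff.2 (sub_ne_zero.2 hzy)
  have hzγ : ‖z‖ ^ (-γ) ≤ ‖z - y‖ ^ (-γ) := rpow_le_rpow_of_nonpos hd hz (by linarith)
  have hyγ : ‖y‖ ^ (-γ) ≤ ‖z - y‖ ^ (-γ) := rpow_le_rpow_of_nonpos hd hy (by linarith)
  unfold Hker
  generalize ‖z - y‖ = d at *
  have hmid : d ^ (-γ) * d ^ (-((N : ℝ) - 2 * s - γ)) = d ^ (-((N : ℝ) - 2 * s)) := by
    rw [← rpow_add hd]; ring_nf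
  have hlast : d ^ (-γ) * d ^ (-γ) * d ^ (-((N : ℝ) - 2 * s - 2 * γ)) =
      d ^ (-((N : ℝ) - 2 * s)) := by
    rw [← rpow_add hd, ← rpow_add hd]; ring_nf
  calc _ ≤ d ^ (-((N : ℝ) - 2 * s)) + (d ^ (-γ) + d ^ (-γ)) * d ^ (-((N : ℝ) - 2 * s - γ)) +
        d ^ (-γ) * d ^ (-γ) * d ^ (-((N : ℝ) - 2 * s - 2 * γ)) := by gcongr
    _ = 4 * d ^ (-((N : ℝ) - 2 * s)) := by rw [add_mul, hmid, hlast]; ring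

lemma Hker_le_of_le_norm_sub {ρ : ℝ} (hγ : γ ∈ Icc 0 (((N : ℝ) - 2 * s) / 2)) (hρ : 0 < ρ)
    (hy : ρ ≤ ‖y‖) (hzy : ρ ≤ ‖z - y‖) :
    Hker N s γ z y ≤
      2 * (ρ ^ (-((N : ℝ) - 2 * s)) + ρ ^ (-((N : ℝ) - 2 * s - γ)) * ‖z‖ ^ (-γ)) := by
  obtain ⟨hγ₀, hγ₁⟩ := hγ
  have hyγ : ‖y‖ ^ (-γ) ≤ ρ ^ (-γ) := rpow_le_rpow_of_nonpos hρ hy (by linarith)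
  have hsub {b : ℝ} (hb : 0 ≤ b) : ‖z - y‖ ^ (-b) ≤ ρ ^ (-b) :=
    rpow_le_rpow_of_nonpos hρ hzy (by linarith)
  have hsub₀ := hsub (b := (N : ℝ) - 2 * s) (by linarith)
  have hsub₁ := hsub (b := (N : ℝ) - 2 * s - γ) (by linarith)
  have hsub₂ := hsub (b := (N : ℝ) - 2 * s - 2 * γ) (by linarith)
  have hmid : ρ ^ (-γ) * ρ ^ (-((N : ℝ) - 2 * s - γ)) = ρ ^ (-((N : ℝ) - 2 * s)) := by
    rw [← rpow_add hρ]; ring_nf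
  have hlast : ρ ^ (-γ) * ρ ^ (-((N : ℝ) - 2 * s - 2 * γ)) = ρ ^ (-((N : ℝ) - 2 * s - γ)) := by
    rw [← rpow_add hρ]; ring_nf
  unfold Hker
  calc _ ≤ ρ ^ (-((N : ℝ) - 2 * s)) +
        (‖z‖ ^ (-γ) + ρ ^ (-γ)) * ρ ^ (-((N : ℝ) - 2 * s - γ)) +
        ‖z‖ ^ (-γ) * ρ ^ (-γ) * ρ ^ (-((N : ℝ) - 2 * s - 2 * γ)) := by gcongr
    _ = _ := by rw [add_mul, hmid, mul_assoc, hlast]; ring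

lemma Hker_mul_sourceMajorant_le {p q ρ : ℝ} (hγ : γ ∈ Icc 0 (((N : ℝ) - 2 * s) / 2))
    (hq : 0 ≤ q) (hρ : 0 < ρ) (K : Set (EuclideanSpace ℝ (Fin N))) (hy : 2 * ρ ≤ ‖y‖)
    (hzy : z ≠ y) :
    Hker N s γ z y * sourceMajorant p q K z ≤
      2 * (ρ ^ (-((N : ℝ) - 2 * s)) * sourceMajorant p q K z +
        ρ ^ (-((N : ℝ) - 2 * s - γ)) * (‖z‖ ^ (-γ) * sourceMajorant p q K z)) +
      4 * (1 + ρ ^ (-q)) *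
        (‖z - y‖ ^ (-((N : ℝ) - 2 * s)) * (Metric.ball 0 ρ).indicator 1 (z - y)) := by
  have hS := sourceMajorant_nonneg p q K z
  rcases lt_or_ge ‖z - y‖ ρ with hnear | hfar
  · have hz : ρ ≤ ‖z‖ := by linarith [norm_le_norm_add_norm_sub z y]
    rw [indicator_of_mem (mem_ball_zero_iff.2 hnear), Pi.one_apply, mul_one]
    refine le_add_of_nonneg_of_le (by positivity) ?_
    calc _ ≤ 4 * ‖z - y‖ ^ (-((N : ℝ) - 2 * s)) * (1 + ρ ^ (-q)) := by
          gcongr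
          · exact Hker_le_of_norm_sub_le_norm hγ.1 hzy (by linarith) (by linarith)
          · exact sourceMajorant_le hq hρ p K hz
      _ = _ := by ring
  · refine le_add_of_le_of_nonneg ?_ (mul_nonneg (by positivity)
      (norm_rpow_mul_indicator_nonneg _ _ (z - y)))
    calc _ ≤ 2 * (ρ ^ (-((N : ℝ) - 2 * s)) + ρ ^ (-((N : ℝ) - 2 * s - γ)) * ‖z‖ ^ (-γ)) *
          sourceMajorant p q K z := by
          gcongr
          exact Hker_le_of_le_norm_sub hγ hρ (by linarith) hfar
      _ = _ := by ring

lemma exists_integrable_dominator_Hker_mul_sourceMajorant (hs : 0 < s) (hN : 2 * s < N)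
    (hγ : γ ∈ Icc 0 (((N : ℝ) - 2 * s) / 2)) {K : Set (EuclideanSpace ℝ (Fin N))}
    (hK : Bornology.IsBounded K) {ρ : ℝ} (hρ : 0 < ρ) :
    ∃ W k : EuclideanSpace ℝ (Fin N) → ℝ, Integrable W ∧ Integrable k ∧
      ∀ z y, 2 * ρ ≤ ‖y‖ → z ≠ y →
        Hker N s γ z y * sourceMajorant ((N : ℝ) + 2 * s) (2 * s) K z ≤ W z + k (z - y) := by
  obtain ⟨R, hR⟩ := hK.subset_ball 0
  let E := EuclideanSpace ℝ (Fin N)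
  let S : E → ℝ := sourceMajorant ((N : ℝ) + 2 * s) (2 * s) (Metric.ball 0 R)
  have hfinrank : (finrank ℝ E : ℝ) = N := by rw [finrank_euclideanSpace_fin]
  have hγS (b : ℝ) (hb : b ∈ Icc 0 γ) : Integrable fun z : E => ‖z‖ ^ (-b) * S z :=
    integrable_norm_rpow_mul_sourceMajorant_ball hb.1 (by linarith [hb.2, hγ.2])
      (by linarith [hb.2, hγ.2]) (by linarith) R
  have hS : Integrable S := by
    simpa only [neg_zero, rpow_zero, one_mul] using hγS 0 (left_mem_Icc.2 hγ.1)
  refine ⟨_, _, ((hS.const_mul (ρ ^ (-((N : ℝ) - 2 * s)))).add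
      ((hγS γ (right_mem_Icc.2 hγ.1)).const_mul (ρ ^ (-((N : ℝ) - 2 * s - γ))))).const_mul 2,
    (integrable_norm_rpow_mul_indicator_ball (b := (N : ℝ) - 2 * s) (by linarith) ρ).const_mul
      (4 * (1 + ρ ^ (-(2 * s)))), fun z y hy hzy => ?_⟩
  refine (Hker_mul_sourceMajorant_le hγ (by linarith) hρ K hy hzy).trans ?_
  simp only [Pi.add_apply]
  gcongr <;> exact sourceMajorant_mono hR _ _ z

end Kernel

theorem green_potential_continuity_general {N : ℕ} {s γ : ℝ} (hs : 0 < s) (hN : 2 * s < N)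
    (hγ : γ ∈ Icc 0 (((N : ℝ) - 2 * s) / 2))
    {Φ : EuclideanSpace ℝ (Fin N) → EuclideanSpace ℝ (Fin N) → ℝ}
    (hΦmeas : ∀ y ≠ 0, AEStronglyMeasurable (Φ · y)) {C₀ : ℝ} (hC₀ : 0 ≤ C₀)
    (hΦH : ∀ z y, z ≠ 0 → y ≠ 0 → z ≠ y → |Φ z y| ≤ C₀ * Hker N s γ z y)
    (hΦcont : ∀ z ≠ 0, ContinuousOn (Φ z) {y | y ≠ 0 ∧ y ≠ z})
    {g : EuclideanSpace ℝ (Fin N) → ℝ} (hg : AEStronglyMeasurable g) {C₁ : ℝ} (hC₁ : 0 ≤ C₁)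
    {K : Set (EuclideanSpace ℝ (Fin N))} (hK : Bornology.IsBounded K)
    (hgK : ∀ z, |g z| ≤ C₁ * sourceMajorant ((N : ℝ) + 2 * s) (2 * s) K z)
    {x : EuclideanSpace ℝ (Fin N)} (hx : x ≠ 0) :
    ContinuousAt (fun y => ∫ z, Φ z y * g z) x := by
  have : Nontrivial (EuclideanSpace ℝ (Fin N)) := nontrivial_of_ne x 0 hx
  have hx₀ : 0 < ‖x‖ := norm_pos_iff.2 hx
  obtain ⟨W, k, hW, hk, hWk⟩ :=
    exists_integrable_dominator_Hker_mul_sourceMajorant hs hN hγ hK (ρ := ‖x‖ / 4) (by positivity)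
  have hy : ∀ᶠ y in 𝓝 x, 2 * (‖x‖ / 4) < ‖y‖ :=
    continuous_norm.continuousAt.eventually_const_lt (by linarith)
  refine continuousAt_integral_of_norm_le_add_translate (W := fun z => C₀ * C₁ * W z)
    (k := fun w => C₀ * C₁ * k w) ?_ (hW.const_mul _) (hk.const_mul _) ?_ ?_
  · filter_upwards [eventually_ne_nhds hx] with y hy₀ using (hΦmeas y hy₀).mul hg
  · filter_upwards [eventually_ne_nhds hx, hy] with y hy₀ hxy
    filter_upwards [Measure.ae_ne volume 0, Measure.ae_ne volume y] with z hz₀ hzy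
    have hΦz := hΦH z y hz₀ hy₀ hzy
    calc ‖Φ z y * g z‖ = |Φ z y| * |g z| := abs_mul _ _
      _ ≤ C₀ * Hker N s γ z y * (C₁ * sourceMajorant ((N : ℝ) + 2 * s) (2 * s) K z) :=
        mul_le_mul hΦz (hgK z) (abs_nonneg _) ((abs_nonneg _).trans hΦz)
      _ = C₀ * C₁ * (Hker N s γ z y * sourceMajorant ((N : ℝ) + 2 * s) (2 * s) K z) := by ring
      _ ≤ C₀ * C₁ * (W z + k (z - y)) := by
        gcongr
        exact hWk z y hxy.le hzy
      _ = C₀ * C₁ * W z + C₀ * C₁ * k (z - y) := mul_add _ _ _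
  · filter_upwards [Measure.ae_ne volume 0, Measure.ae_ne volume x] with z hz₀ hzx
    have hopen : IsOpen {y : EuclideanSpace ℝ (Fin N) | y ≠ 0 ∧ y ≠ z} :=
      isOpen_ne.inter isOpen_ne
    exact ((hΦcont z hz₀).continuousAt (hopen.mem_nhds ⟨hx, hzx.symm⟩)).mul continuousAt_const

theorem green_potential_continuity
    (N : ℕ) (s γ : ℝ) (hs : s ∈ Set.Ioo (0:ℝ) 1)
    (hN : 2 * s < (N : ℝ)) (hγ : γ ∈ Set.Ioo (0:ℝ) (((N : ℝ) - 2*s)/2))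
    (Φ : EuclideanSpace ℝ (Fin N) → EuclideanSpace ℝ (Fin N) → ℝ)
    (hΦmeas : Measurable fun p : EuclideanSpace ℝ (Fin N) × EuclideanSpace ℝ (Fin N) =>
      Φ p.1 p.2)
    (hΦnonneg : ∀ z y : EuclideanSpace ℝ (Fin N), z ≠ 0 → y ≠ 0 → 0 ≤ Φ z y)
    (C₀ : ℝ) (hC₀ : 0 < C₀)
    (hΦH : ∀ z y : EuclideanSpace ℝ (Fin N), z ≠ 0 → y ≠ 0 → z ≠ y →
      Φ z y ≤ C₀ * Hker N s γ z y)
    (hΦcont : ∀ z : EuclideanSpace ℝ (Fin N), z ≠ 0 →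
      ContinuousOn (Φ z) {y : EuclideanSpace ℝ (Fin N) | y ≠ 0 ∧ y ≠ z})
    (g : EuclideanSpace ℝ (Fin N) → ℝ) (hg : Measurable g)
    (C₁ : ℝ) (hC₁ : 0 < C₁)
    (K : Set (EuclideanSpace ℝ (Fin N))) (hK : IsCompact K)
    (hgb : ∀ z : EuclideanSpace ℝ (Fin N),
      |g z| ≤ C₁ * (1 / (1 + ‖z‖ ^ ((N : ℝ) + 2*s)) + ‖z‖ ^ (-(2*s)) * K.indicator 1 z)) :
    ∀ x : EuclideanSpace ℝ (Fin N), x ≠ 0 →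
      ContinuousAt (fun y => ∫ z, Φ z y * g z) x := by
  intro x hx
  exact green_potential_continuity_general hs.1 hN (Ioo_subset_Icc_self hγ)
    (fun y _ => (hΦmeas.comp measurable_prodMk_right).aestronglyMeasurable) hC₀.le
    (fun z y hz hy hzy => (abs_of_nonneg (hΦnonneg z y hz hy)).trans_le (hΦH z y hz hy hzy))
    hΦcont hg.aestronglyMeasurable hC₁.le hK.isBounded hgb hx
end

section
/- Let s ∈ (0,1) and N ∈ ℕ with N > 2s, and set Λ_{N,s} := 2^{2s}·Γ((N+2s)/4)² / Γ((N−2s)/4)². For every θ with 0 < θ ≤ Λ_{N,s} there exists a unique γ with 0 < γ ≤ (N−2s)/2 such that θ = 2^{2s}·Γ((γ+2s)/2)·Γ((N−γ)/2) / ( Γ((N−γ−2s)/2)·Γ(γ/2) ). Moreover θ = Λ_{N,s} if and only if γ = (N−2s)/2. -/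
open Real Set

/-!
Put `a = γ/2` and `b = (N - γ - 2s)/2`. The right-hand side of the correspondence is
`2^(2s) · Γ(a+s)/Γ(a) · Γ(b+s)/Γ(b)`, where the sum `a + b` does not depend on `γ`. By Euler's limit
formula, `log (Γ(x+s)/Γ(x))` is a limit of sums of the functions `log (x+m) - log (x+s+m)` and
constants; these functions are strictly concave in `x > 0`, hence so is the limit. A strictly
concave function takes larger total values at a pair of points when the pair is contracted around
its midpoint, so the right-hand side increases strictly with `γ` up to `a = b`, where its value is
`Λ_{N,s}`. As `1/Γ` is continuous and vanishes at `0`, the right-hand side tends to `0` as `γ → 0`,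
and the intermediate value theorem shows that all of `(0, Λ_{N,s}]` is attained.
-/

open Filter BohrMollerup
open scoped Topology

theorem map_add_map_lt_of_strictConcaveOn {𝕜 : Type*} [Field 𝕜] [LinearOrder 𝕜]
    [IsStrictOrderedRing 𝕜] {S : Set 𝕜} {f : 𝕜 → 𝕜} (hf : StrictConcaveOn 𝕜 S f) {x y z w : 𝕜}
    (hx : x ∈ S) (hw : w ∈ S) (hxy : x < y) (hyw : y < w) (hsum : y + z = x + w) :
    f x + f w < f y + f z := by
  have hxw : x < w := hxy.trans hyw
  obtain ⟨a, b, ha, hb, hab, hy⟩ : y ∈ openSegment 𝕜 x w := by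
    rw [openSegment_eq_Ioo hxw]
    exact ⟨hxy, hyw⟩
  rw [smul_eq_mul, smul_eq_mul] at hy
  have hz : b * x + a * w = z := by linear_combination (x + w) * hab - hy - hsum
  have hfy : a * f x + b * f w < f y := by
    simpa only [smul_eq_mul, hy] using hf.2 hx hw hxw.ne ha hb hab
  have hfz : b * f x + a * f w < f z := by
    simpa only [smul_eq_mul, hz] using hf.2 hx hw hxw.ne hb ha ((add_comm b a).trans hab)
  calc f x + f w = (a * f x + b * f w) + (b * f x + a * f w) := by
        linear_combination -(f x + f w) * hab
    _ < f y + f z := add_lt_add hfy hfz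

section PointwiseOperations

variable {𝕜 E β ι : Type*} [Semiring 𝕜] [PartialOrder 𝕜] [AddCommMonoid E] [SMul 𝕜 E]
  [AddCommMonoid β] [PartialOrder β] {S : Set E} {f : ι → E → β}

theorem concaveOn_finset_sum [IsOrderedAddMonoid β] [Module 𝕜 β] (hS : Convex 𝕜 S)
    (t : Finset ι) (hf : ∀ i ∈ t, ConcaveOn 𝕜 S (f i)) :
    ConcaveOn 𝕜 S fun x => ∑ i ∈ t, f i x := by
  rw [← Finset.sum_fn]
  exact Finset.sum_induction f (ConcaveOn 𝕜 S) (fun _ _ => ConcaveOn.add) (concaveOn_const 0 hS) hf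

theorem concaveOn_of_tendsto [SMul 𝕜 β] [TopologicalSpace β] [OrderClosedTopology β]
    [ContinuousAdd β] [ContinuousConstSMul 𝕜 β] {l : Filter ι} [l.NeBot] {g : E → β}
    (hS : Convex 𝕜 S) (hf : ∀ i, ConcaveOn 𝕜 S (f i))
    (hfg : ∀ x ∈ S, Tendsto (fun i => f i x) l (𝓝 (g x))) : ConcaveOn 𝕜 S g :=
  ⟨hS, fun x hx y hy a b ha hb hab =>
    le_of_tendsto_of_tendsto' (((hfg x hx).const_smul a).add ((hfg y hy).const_smul b))
      (hfg _ (hS hx hy ha hb hab)) fun i => (hf i).2 hx hy ha hb hab⟩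

end PointwiseOperations

theorem strictConcaveOn_log_sub_log_add {s : ℝ} (hs : 0 < s) :
    StrictConcaveOn ℝ (Ioi 0) fun x => log x - log (x + s) := by
  have hderiv : ∀ x ∈ Ioi (0 : ℝ), HasDerivAt (fun x => log x - log (x + s))
      (1 / x - 1 / (x + s)) x := fun x (hx : 0 < x) =>
    ((hasDerivAt_id x).log hx.ne').sub (((hasDerivAt_id x).add_const s).log (by positivity))
  refine StrictAntiOn.strictConcaveOn_of_deriv (convex_Ioi 0)
    (fun x hx => (hderiv x hx).continuousAt.continuousWithinAt) ?_
  rw [interior_Ioi]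
  intro x (hx : 0 < x) y (hy : 0 < y) hxy
  have hsplit : ∀ u : ℝ, 0 < u → 1 / u - 1 / (u + s) = s / (u * (u + s)) := fun u hu => by
    field_simp
    ring
  rw [(hderiv x hx).deriv, (hderiv y hy).deriv, hsplit x hx, hsplit y hy]
  gcongr

/-- The logarithm of `Γ(x + s) / Γ(x)`, for `x` and `x + s` positive. -/
noncomputable def logGammaRatio (s x : ℝ) : ℝ :=
  log (Gamma (x + s)) - log (Gamma x)

theorem logGammaRatio_eq_add_one {s x : ℝ} (hx : 0 < x) (hxs : 0 < x + s) :
    logGammaRatio s x = log x - log (x + s) + logGammaRatio s (x + 1) := by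
  have hΓ : ∀ y : ℝ, 0 < y → log (Gamma (y + 1)) = log y + log (Gamma y) := fun y hy => by
    rw [Gamma_add_one hy.ne', log_mul hy.ne' (Gamma_pos_of_pos hy).ne']
  rw [logGammaRatio, logGammaRatio, add_right_comm, hΓ x hx, hΓ (x + s) hxs]
  ring

theorem tendsto_sum_logGammaRatio {s x : ℝ} (hx : 0 < x) (hxs : 0 < x + s) :
    Tendsto (fun n : ℕ => s * log n +
      ∑ m ∈ Finset.range (n + 1), (log (x + m) - log (x + m + s))) atTop
      (𝓝 (logGammaRatio s x)) := by
  refine ((tendsto_log_gamma hxs).sub (tendsto_log_gamma hx)).congr fun n => ?_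
  simp only [logGammaSeq, Finset.sum_sub_distrib, add_right_comm x s]
  ring

theorem concaveOn_logGammaRatio {s : ℝ} (hs : 0 < s) :
    ConcaveOn ℝ (Ioi 0) (logGammaRatio s) := by
  have hterm (m : ℕ) : ConcaveOn ℝ (Ioi 0) fun x : ℝ => log (x + m) - log (x + m + s) :=
    ((strictConcaveOn_log_sub_log_add hs).concaveOn.translate_left (m : ℝ)).subset
      (fun x (hx : 0 < x) => add_pos_of_nonneg_of_pos m.cast_nonneg hx) (convex_Ioi 0)
  exact concaveOn_of_tendsto (convex_Ioi 0)
    (fun n : ℕ => (concaveOn_const (s * log n) (convex_Ioi 0)).add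
      (concaveOn_finset_sum (convex_Ioi 0) (Finset.range (n + 1)) fun m _ => hterm m))
    fun x hx => tendsto_sum_logGammaRatio hx (add_pos hx hs)

-- The limit only preserves weak concavity; the first term of the Euler product restores strictness.
theorem strictConcaveOn_logGammaRatio {s : ℝ} (hs : 0 < s) :
    StrictConcaveOn ℝ (Ioi 0) (logGammaRatio s) := by
  have hshift : ConcaveOn ℝ (Ioi 0) fun x => logGammaRatio s (x + 1) :=
    ((concaveOn_logGammaRatio hs).translate_left 1).subset
      (fun x (hx : 0 < x) => add_pos one_pos hx) (convex_Ioi 0)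
  exact ((strictConcaveOn_log_sub_log_add hs).add_concaveOn hshift).congr
    fun x hx => (logGammaRatio_eq_add_one hx (add_pos hx hs)).symm

theorem continuous_Gamma_inv : Continuous fun x : ℝ => (Gamma x)⁻¹ := by
  have h := Complex.continuous_re.comp
    (Complex.differentiable_one_div_Gamma.continuous.comp Complex.continuous_ofReal)
  refine h.congr fun x => ?_
  simp only [Function.comp_apply, Complex.Gamma_ofReal, ← Complex.ofReal_inv, Complex.ofReal_re]

/-- The sharp constant `Λ_{d,s}` of the fractional Hardy inequality, for a real dimension `d`. -/
noncomputable def hardyConstant (d s : ℝ) : ℝ :=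
  2 ^ (2 * s) * Gamma ((d + 2 * s) / 4) ^ 2 / Gamma ((d - 2 * s) / 4) ^ 2

/-- The coupling `θ` for which `γ` is the exponent of the fractional Hardy operator
`(-Δ)^s - θ/|x|^(2s)`, for a real dimension `d`. Its value at `γ = 0` is the limit `0`, since Lean's
convention `Γ(0)⁻¹ = 0` agrees with the entire function `1/Γ`. -/
noncomputable def hardyCoupling (d s γ : ℝ) : ℝ :=
  2 ^ (2 * s) * Gamma ((γ + 2 * s) / 2) * Gamma ((d - γ) / 2) /
    (Gamma ((d - γ - 2 * s) / 2) * Gamma (γ / 2))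

section Coupling

variable {d s : ℝ}

theorem hardyCoupling_zero : hardyCoupling d s 0 = 0 := by
  simp [hardyCoupling]

theorem hardyCoupling_midpoint : hardyCoupling d s ((d - 2 * s) / 2) = hardyConstant d s := by
  rw [hardyCoupling, hardyConstant,
    show ((d - 2 * s) / 2 + 2 * s) / 2 = (d + 2 * s) / 4 by ring,
    show (d - (d - 2 * s) / 2) / 2 = (d + 2 * s) / 4 by ring,
    show (d - (d - 2 * s) / 2 - 2 * s) / 2 = (d - 2 * s) / 4 by ring,
    show (d - 2 * s) / 2 / 2 = (d - 2 * s) / 4 by ring]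
  ring

theorem continuousOn_hardyCoupling : ContinuousOn (hardyCoupling d s) (Ioo (-(2 * s)) d) := by
  have hΓ := differentiableOn_Gamma_Ioi.continuousOn
  have h₁ : ContinuousOn (fun γ => Gamma ((γ + 2 * s) / 2)) (Ioo (-(2 * s)) d) :=
    hΓ.comp (by fun_prop) fun γ hγ => mem_Ioi.2 (by linarith [hγ.1])
  have h₂ : ContinuousOn (fun γ => Gamma ((d - γ) / 2)) (Ioo (-(2 * s)) d) :=
    hΓ.comp (by fun_prop) fun γ hγ => mem_Ioi.2 (by linarith [hγ.2])
  have h₃ : Continuous fun γ => (Gamma ((d - γ - 2 * s) / 2))⁻¹ :=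
    continuous_Gamma_inv.comp (by fun_prop)
  have h₄ : Continuous fun γ => (Gamma (γ / 2))⁻¹ := continuous_Gamma_inv.comp (by fun_prop)
  refine (((h₁.const_mul (2 ^ (2 * s))).mul h₂).mul (h₃.mul h₄).continuousOn).congr fun γ _ => ?_
  simp only [hardyCoupling, div_eq_mul_inv, mul_inv, Pi.mul_apply]

theorem hardyCoupling_eq_exp {γ : ℝ} (hs : 0 < s) (hγ : γ ∈ Ioo 0 (d - 2 * s)) :
    hardyCoupling d s γ =
      2 ^ (2 * s) * exp (logGammaRatio s (γ / 2) + logGammaRatio s ((d - γ - 2 * s) / 2)) := by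
  have hratio {x : ℝ} (hx : 0 < x) : exp (logGammaRatio s x) = Gamma (x + s) / Gamma x := by
    rw [logGammaRatio, exp_sub, exp_log (Gamma_pos_of_pos (by positivity)),
      exp_log (Gamma_pos_of_pos hx)]
  rw [exp_add, hratio (by linarith [hγ.1]), hratio (by linarith [hγ.2]), hardyCoupling,
    show γ / 2 + s = (γ + 2 * s) / 2 by ring,
    show (d - γ - 2 * s) / 2 + s = (d - γ) / 2 by ring]
  ring

theorem strictMonoOn_hardyCoupling (hs : 0 < s) :
    StrictMonoOn (hardyCoupling d s) (Ioc 0 ((d - 2 * s) / 2)) := by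
  rintro γ ⟨hγ, -⟩ γ' ⟨hγ', hγ'd⟩ hlt
  rw [hardyCoupling_eq_exp hs ⟨hγ, by linarith⟩, hardyCoupling_eq_exp hs ⟨hγ', by linarith⟩]
  have hlog : logGammaRatio s (γ / 2) + logGammaRatio s ((d - γ - 2 * s) / 2) <
      logGammaRatio s (γ' / 2) + logGammaRatio s ((d - γ' - 2 * s) / 2) :=
    map_add_map_lt_of_strictConcaveOn (strictConcaveOn_logGammaRatio hs) (mem_Ioi.2 (by linarith))
      (mem_Ioi.2 (by linarith)) (by linarith) (by linarith) (by ring)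
  gcongr

theorem surjOn_hardyCoupling (hs : 0 < s) (hd : 2 * s < d) :
    SurjOn (hardyCoupling d s) (Ioc 0 ((d - 2 * s) / 2)) (Ioc 0 (hardyConstant d s)) := by
  have hcont : ContinuousOn (hardyCoupling d s) (Icc 0 ((d - 2 * s) / 2)) :=
    continuousOn_hardyCoupling.mono (Icc_subset_Ioo (by linarith) (by linarith))
  have hivt := intermediate_value_Ioc (by linarith) hcont
  rwa [hardyCoupling_zero, hardyCoupling_midpoint] at hivt

theorem theta_gamma_correspondence_general (hs : 0 < s) (hd : 2 * s < d) {θ : ℝ} (hθ : 0 < θ)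
    (hθΛ : θ ≤ hardyConstant d s) :
    (∃! γ : ℝ, 0 < γ ∧ γ ≤ (d - 2 * s) / 2 ∧ θ = hardyCoupling d s γ) ∧
    ∀ γ : ℝ, 0 < γ → γ ≤ (d - 2 * s) / 2 → θ = hardyCoupling d s γ →
      (θ = hardyConstant d s ↔ γ = (d - 2 * s) / 2) := by
  have hinj : InjOn (hardyCoupling d s) (Ioc 0 ((d - 2 * s) / 2)) :=
    (strictMonoOn_hardyCoupling hs).injOn
  constructor
  · obtain ⟨γ, hγ, rfl⟩ := surjOn_hardyCoupling hs hd ⟨hθ, hθΛ⟩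
    exact ⟨γ, ⟨hγ.1, hγ.2, rfl⟩, fun γ' ⟨h₀, h₁, h⟩ => hinj ⟨h₀, h₁⟩ hγ h.symm⟩
  · rintro γ h₀ h₁ rfl
    rw [← hardyCoupling_midpoint]
    exact hinj.eq_iff ⟨h₀, h₁⟩ ⟨by linarith, le_rfl⟩

end Coupling

theorem theta_gamma_correspondence
    (N : ℕ) (s : ℝ) (hs : s ∈ Set.Ioo (0:ℝ) 1) (hN : 2 * s < (N : ℝ))
    (Λ : ℝ)
    (hΛ : Λ = 2 ^ (2*s) * Real.Gamma (((N : ℝ) + 2*s)/4) ^ 2 /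
      Real.Gamma (((N : ℝ) - 2*s)/4) ^ 2)
    (θ : ℝ) (hθ : 0 < θ) (hθΛ : θ ≤ Λ) :
    (∃! γ : ℝ, 0 < γ ∧ γ ≤ ((N : ℝ) - 2*s)/2 ∧
      θ = 2 ^ (2*s) * Real.Gamma ((γ + 2*s)/2) * Real.Gamma (((N : ℝ) - γ)/2) /
        (Real.Gamma (((N : ℝ) - γ - 2*s)/2) * Real.Gamma (γ/2))) ∧
    (∀ γ : ℝ, 0 < γ → γ ≤ ((N : ℝ) - 2*s)/2 →
      θ = 2 ^ (2*s) * Real.Gamma ((γ + 2*s)/2) * Real.Gamma (((N : ℝ) - γ)/2) /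
        (Real.Gamma (((N : ℝ) - γ - 2*s)/2) * Real.Gamma (γ/2)) →
      (θ = Λ ↔ γ = ((N : ℝ) - 2*s)/2)) := by
  subst hΛ
  exact theta_gamma_correspondence_general hs.1 hN hθ hθΛ
end
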